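/- (Hofmann fidelity lemma) Let Λ be a completely positive trace-preserving map on a single qubit, given in Kraus form: Λ(ρ) = ∑_{i} K_i ρ K_iᴴ for 2×2 complex matrices K_i (finitely many) with ∑_i K_iᴴ K_i = 1. For a unit vector ψ ∈ ℂ², define the fidelity F(ψ) = ⟨ψ, Λ(|ψ⟩⟨ψ|) ψ⟩ (a real number). Let F_x = (F(|0⟩) + F(|1⟩))/2 and F_z = (F(|+⟩) + F(|−⟩))/2, where |0⟩, |1⟩ are the eigenstates of σ_z and |±⟩ = (|0⟩ ± |1⟩)/√2 are the eigenstates of σ_x. Then the average fidelity over uniformly chosen input pure states satisfies F̄ = ∫ F(ψ) dψ ≥ F_x + F_z − 1, where the integral is with respect to the uniform (unitarily invariant) probability measure on the unit sphere of ℂ². -/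

import Mathlib

/-!
Expanding each Kraus operator in the Pauli basis, `K k = a k + b k σ_x + c k σ_y + d k σ_z`,
gives `F(ψ) = ∑ k, |⟨ψ, K k ψ⟩|²`. The two basis averages are `∑ (|a k|² + |d k|²)` and
`∑ (|a k|² + |b k|²)`, while the trace of the Kraus condition says
`∑ (|a k|² + |b k|² + |c k|² + |d k|²) = 1`. Hence the right-hand side of the claim is
`∑ (|a k|² - |c k|²) ≤ ∑ |a k|²` (`basis_fidelity_le`).

The average fidelity is at least `∑ |a k|²` already because `μ` is invariant under the Pauli
unitaries: `ψ`, `σ_x ψ`, `σ_z ψ`, `σ_x σ_z ψ` have projectors summing to twice the identity, so the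
mean of the four values `⟨·, K k ·⟩` is `tr (K k) / 2 = a k` for every unit vector `ψ`, and the
mean of the squared moduli is at least `|a k|²` (`fidelity_twirl_ge`). It remains to integrate this
pointwise inequality.
-/

open MeasureTheory Matrix

noncomputable section

/-- A single-qubit pure state lives in `ℂ²`. -/
abbrev Qubit := EuclideanSpace ℂ (Fin 2)

instance : MeasurableSpace Qubit := borel Qubit

instance : BorelSpace Qubit := ⟨rfl⟩

/-- The rank-one density matrix `|ψ⟩⟨ψ|` of a qubit state `ψ`. -/
def densityMatrix (ψ : Qubit) : Matrix (Fin 2) (Fin 2) ℂ :=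
  Matrix.of fun i j => ψ i * (starRingEnd ℂ) (ψ j)

/-- The channel `Λ(ρ) = ∑ i, K i * ρ * (K i)ᴴ` determined by the Kraus
operators `K`. -/
def krausChannel {N : ℕ} (K : Fin N → Matrix (Fin 2) (Fin 2) ℂ)
    (ρ : Matrix (Fin 2) (Fin 2) ℂ) : Matrix (Fin 2) (Fin 2) ℂ :=
  ∑ i, K i * ρ * (K i)ᴴ

/-- The fidelity `F(ψ) = ⟨ψ, Λ(|ψ⟩⟨ψ|) ψ⟩` of the channel with Kraus operators
`K` on the input pure state `ψ` (a real number). -/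
def fidelity {N : ℕ} (K : Fin N → Matrix (Fin 2) (Fin 2) ℂ) (ψ : Qubit) : ℝ :=
  (∑ i, ∑ j, (starRingEnd ℂ) (ψ i) * krausChannel K (densityMatrix ψ) i j * ψ j).re

/-- The unit sphere of pure qubit states. -/
abbrev QubitSphere := Metric.sphere (0 : Qubit) 1

/-- A linear isometry of `ℂ²` (a unitary) restricted to the unit sphere. -/
def sphereMap (U : Qubit ≃ₗᵢ[ℂ] Qubit) (x : QubitSphere) : QubitSphere :=
  ⟨U x.1, by
    rw [mem_sphere_zero_iff_norm, U.norm_map]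
    exact mem_sphere_zero_iff_norm.mp x.2⟩

/-- The eigenstate `|0⟩` of `σ_z`. -/
def e0 : Qubit := EuclideanSpace.single 0 1

/-- The eigenstate `|1⟩` of `σ_z`. -/
def e1 : Qubit := EuclideanSpace.single 1 1

/-- The eigenstate `|+⟩ = (|0⟩ + |1⟩)/√2` of `σ_x`. -/
def ePlus : Qubit := (Real.sqrt 2 : ℂ)⁻¹ • (e0 + e1)

/-- The eigenstate `|−⟩ = (|0⟩ − |1⟩)/√2` of `σ_x`. -/
def eMinus : Qubit := (Real.sqrt 2 : ℂ)⁻¹ • (e0 - e1)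

/-- The expectation value `⟨ψ, M ψ⟩` of a `2 × 2` matrix, written in coordinates. -/
def expect (M : Matrix (Fin 2) (Fin 2) ℂ) (ψ : Qubit) : ℂ :=
  (starRingEnd ℂ) (ψ 0) * (M 0 0 * ψ 0 + M 0 1 * ψ 1) +
    (starRingEnd ℂ) (ψ 1) * (M 1 0 * ψ 0 + M 1 1 * ψ 1)

theorem fidelity_eq {N : ℕ} (K : Fin N → Matrix (Fin 2) (Fin 2) ℂ) (ψ : Qubit) :
    fidelity K ψ = ∑ k, Complex.normSq (expect (K k) ψ) := by
  have h : (∑ i, ∑ j, (starRingEnd ℂ) (ψ i) * krausChannel K (densityMatrix ψ) i j * ψ j)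
      = ∑ k, ((Complex.normSq (expect (K k) ψ) : ℝ) : ℂ) := by
    simp only [krausChannel, Matrix.sum_apply, Finset.mul_sum, Finset.sum_mul,
      Fin.sum_univ_two, ← Finset.sum_add_distrib]
    refine Finset.sum_congr rfl fun k _ => ?_
    rw [← Complex.mul_conj]
    simp only [expect, Matrix.mul_apply, densityMatrix, Matrix.of_apply, Fin.sum_univ_two,
      Matrix.conjTranspose_apply, map_add, map_mul, Complex.conj_conj, RCLike.star_def]
    ring
  rw [fidelity, h, ← Complex.ofReal_sum, Complex.ofReal_re]

/-- The Pauli matrix `σ_x` as a unitary of `ℂ²`. -/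
def pauliX : Qubit ≃ₗᵢ[ℂ] Qubit :=
  LinearIsometryEquiv.piLpCongrLeft 2 ℂ ℂ (Equiv.swap 0 1)

/-- The Pauli matrix `σ_z` as a unitary of `ℂ²`. -/
def pauliZ : Qubit ≃ₗᵢ[ℂ] Qubit :=
  LinearIsometryEquiv.piLpCongrRight 2
    (fun i : Fin 2 => if i = 0 then LinearIsometryEquiv.refl ℂ ℂ else LinearIsometryEquiv.neg ℂ)

@[simp] theorem pauliX_zero (ψ : Qubit) : pauliX ψ 0 = ψ 1 := by
  simp [pauliX, LinearIsometryEquiv.piLpCongrLeft_apply]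

@[simp] theorem pauliX_one (ψ : Qubit) : pauliX ψ 1 = ψ 0 := by
  simp [pauliX, LinearIsometryEquiv.piLpCongrLeft_apply]

@[simp] theorem pauliZ_zero (ψ : Qubit) : pauliZ ψ 0 = ψ 0 := by
  simp [pauliZ]

@[simp] theorem pauliZ_one (ψ : Qubit) : pauliZ ψ 1 = -ψ 1 := by
  simp [pauliZ]

/-- Twirling over the Pauli group: the four projectors sum to `2 • 1`. -/
theorem expect_twirl (M : Matrix (Fin 2) (Fin 2) ℂ) (ψ : Qubit) (hψ : ‖ψ‖ = 1) :
    expect M ψ + expect M (pauliX ψ) + expect M (pauliZ ψ) + expect M (pauliX (pauliZ ψ)) =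
      2 * (M 0 0 + M 1 1) := by
  have h : (starRingEnd ℂ) (ψ 0) * ψ 0 + (starRingEnd ℂ) (ψ 1) * ψ 1 = 1 := by
    have h1 := EuclideanSpace.norm_sq_eq ψ
    rw [hψ, Fin.sum_univ_two] at h1
    rw [Complex.conj_mul', Complex.conj_mul']
    exact_mod_cast h1.symm.trans (one_pow 2)
  simp only [expect, pauliX_zero, pauliX_one, pauliZ_zero, pauliZ_one, map_neg]
  linear_combination 2 * (M 0 0 + M 1 1) * h

/-- The quadratic-mean inequality in `ℂ` for four numbers. -/
theorem normSq_add_four_le (a b c d : ℂ) :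
    Complex.normSq (a + b + c + d) ≤
      4 * (Complex.normSq a + Complex.normSq b + Complex.normSq c + Complex.normSq d) := by
  simp only [Complex.normSq_apply, Complex.add_re, Complex.add_im]
  nlinarith [sq_nonneg (a.re - b.re), sq_nonneg (a.re - c.re), sq_nonneg (a.re - d.re),
    sq_nonneg (b.re - c.re), sq_nonneg (b.re - d.re), sq_nonneg (c.re - d.re),
    sq_nonneg (a.im - b.im), sq_nonneg (a.im - c.im), sq_nonneg (a.im - d.im),
    sq_nonneg (b.im - c.im), sq_nonneg (b.im - d.im), sq_nonneg (c.im - d.im)]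

theorem fidelity_twirl_ge {N : ℕ} (K : Fin N → Matrix (Fin 2) (Fin 2) ℂ) (ψ : Qubit)
    (hψ : ‖ψ‖ = 1) :
    ∑ k, Complex.normSq (K k 0 0 + K k 1 1) ≤
      fidelity K ψ + fidelity K (pauliX ψ) + fidelity K (pauliZ ψ) +
        fidelity K (pauliX (pauliZ ψ)) := by
  simp only [fidelity_eq, ← Finset.sum_add_distrib]
  refine Finset.sum_le_sum fun k _ => ?_
  have h := normSq_add_four_le (expect (K k) ψ) (expect (K k) (pauliX ψ))
    (expect (K k) (pauliZ ψ)) (expect (K k) (pauliX (pauliZ ψ)))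
  rw [expect_twirl _ _ hψ, Complex.normSq_mul, Complex.normSq_ofNat] at h
  linarith

/-- The trace of the normalization condition `∑ k, (K k)ᴴ * K k = 1`. -/
theorem sum_normSq_kraus {N : ℕ} (K : Fin N → Matrix (Fin 2) (Fin 2) ℂ)
    (hK : ∑ i, (K i)ᴴ * K i = 1) :
    ∑ k, (Complex.normSq (K k 0 0) + Complex.normSq (K k 0 1) + Complex.normSq (K k 1 0) +
      Complex.normSq (K k 1 1)) = 2 := by
  have h := congrArg Matrix.trace hK
  simp only [Matrix.trace_sum, Matrix.trace_fin_two, Matrix.mul_apply, Fin.sum_univ_two,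
    Matrix.conjTranspose_apply, Matrix.one_apply_eq, RCLike.star_def,
    ← Complex.normSq_eq_conj_mul_self] at h
  have h2 : ∑ k, (Complex.normSq (K k 0 0) + Complex.normSq (K k 1 0) +
      (Complex.normSq (K k 0 1) + Complex.normSq (K k 1 1))) = 1 + 1 := by exact_mod_cast h
  refine (Finset.sum_congr rfl fun k _ => by ring).trans (h2.trans one_add_one_eq_two)

theorem expect_e0 (M : Matrix (Fin 2) (Fin 2) ℂ) : expect M e0 = M 0 0 := by
  simp [expect, e0]

theorem expect_e1 (M : Matrix (Fin 2) (Fin 2) ℂ) : expect M e1 = M 1 1 := by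
  simp [expect, e1]

theorem inv_sqrt_two_mul_self :
    ((Real.sqrt 2 : ℂ)⁻¹) * ((Real.sqrt 2 : ℂ)⁻¹) = 1 / 2 := by
  rw [← mul_inv, ← Complex.ofReal_mul, Real.mul_self_sqrt (by norm_num)]
  norm_num

theorem expect_ePlus (M : Matrix (Fin 2) (Fin 2) ℂ) :
    expect M ePlus = (M 0 0 + M 0 1 + M 1 0 + M 1 1) / 2 := by
  simp only [expect, ePlus, e0, e1, PiLp.smul_apply, PiLp.add_apply,
    PiLp.single_apply, smul_eq_mul, map_mul, map_inv₀, Complex.conj_ofReal]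
  simp
  linear_combination (M 0 0 + M 0 1 + M 1 0 + M 1 1) * inv_sqrt_two_mul_self

theorem expect_eMinus (M : Matrix (Fin 2) (Fin 2) ℂ) :
    expect M eMinus = (M 0 0 - M 0 1 - M 1 0 + M 1 1) / 2 := by
  simp only [expect, eMinus, e0, e1, PiLp.smul_apply, PiLp.sub_apply,
    PiLp.single_apply, smul_eq_mul, map_mul, map_inv₀, Complex.conj_ofReal]
  simp
  linear_combination (M 0 0 - M 0 1 - M 1 0 + M 1 1) * inv_sqrt_two_mul_self

/-- With `K k = a k + b k σ_x + c k σ_y + d k σ_z`, the left-hand side equals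
`∑ k, (|a k|² - |c k|²)` and the right-hand side is `∑ k, |a k|²`. -/
theorem basis_fidelity_le {N : ℕ} (K : Fin N → Matrix (Fin 2) (Fin 2) ℂ)
    (hK : ∑ i, (K i)ᴴ * K i = 1) :
    (fidelity K e0 + fidelity K e1) / 2 + (fidelity K ePlus + fidelity K eMinus) / 2 - 1 ≤
      (∑ k, Complex.normSq (K k 0 0 + K k 1 1)) / 4 := by
  have h1 : (1 : ℝ) = (∑ k, (Complex.normSq (K k 0 0) + Complex.normSq (K k 0 1) +
      Complex.normSq (K k 1 0) + Complex.normSq (K k 1 1))) / 2 := by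
    rw [sum_normSq_kraus K hK]; norm_num
  rw [h1]
  simp only [fidelity_eq, expect_e0, expect_e1, expect_ePlus, expect_eMinus,
    ← Finset.sum_add_distrib, Finset.sum_div, ← Finset.sum_sub_distrib]
  refine Finset.sum_le_sum fun k _ => ?_
  -- The difference of the two sides is `|c k|² = |K k 0 1 - K k 1 0|² / 4`.
  have h := Complex.normSq_nonneg (K k 0 1 - K k 1 0)
  rw [Complex.normSq_div, Complex.normSq_div, Complex.normSq_ofNat]
  simp only [Complex.normSq_apply, Complex.add_re, Complex.add_im, Complex.sub_re,
    Complex.sub_im] at h ⊢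
  linarith

theorem continuous_fidelity {N : ℕ} (K : Fin N → Matrix (Fin 2) (Fin 2) ℂ) :
    Continuous (fidelity K) := by
  have h : fidelity K = fun ψ => ∑ k, Complex.normSq (expect (K k) ψ) :=
    funext (fidelity_eq K)
  rw [h]
  refine continuous_finsetSum _ fun k _ => Complex.continuous_normSq.comp ?_
  unfold expect
  fun_prop

theorem measurable_sphereMap (U : Qubit ≃ₗᵢ[ℂ] Qubit) : Measurable (sphereMap U) :=
  ((U.continuous.comp continuous_subtype_val).subtype_mk _).measurable

theorem integrable_fidelity_comp {N : ℕ} (K : Fin N → Matrix (Fin 2) (Fin 2) ℂ)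
    (μ : Measure QubitSphere) [IsProbabilityMeasure μ] (U : Qubit ≃ₗᵢ[ℂ] Qubit) :
    Integrable (fun ψ : QubitSphere => fidelity K (U ψ.1)) μ :=
  ((continuous_fidelity K).comp
    (U.continuous.comp continuous_subtype_val)).integrable_of_hasCompactSupport
      (HasCompactSupport.of_compactSpace _)

theorem integral_fidelity_comp {N : ℕ} (K : Fin N → Matrix (Fin 2) (Fin 2) ℂ)
    (μ : Measure QubitSphere)
    (hμ : ∀ U : Qubit ≃ₗᵢ[ℂ] Qubit, Measure.map (sphereMap U) μ = μ)
    (U : Qubit ≃ₗᵢ[ℂ] Qubit) :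
    ∫ ψ : QubitSphere, fidelity K (U ψ.1) ∂μ = ∫ ψ : QubitSphere, fidelity K ψ.1 ∂μ := by
  conv_rhs => rw [← hμ U]
  rw [integral_map (measurable_sphereMap U).aemeasurable]
  · rfl
  · exact ((continuous_fidelity K).comp continuous_subtype_val).measurable.aestronglyMeasurable

/-- **Hofmann fidelity lemma.** Let `Λ` be a quantum channel on a qubit given
in Kraus form by operators `K i` with `∑ i, (K i)ᴴ * K i = 1`, and let `μ` be
the uniform measure on pure qubit states, i.e. a probability measure on the
unit sphere of `ℂ²` invariant under every unitary.  Then the average fidelity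
satisfies `F̄ = ∫ F(ψ) dμ(ψ) ≥ F_x + F_z − 1`, where
`F_x = (F(|0⟩) + F(|1⟩))/2` and `F_z = (F(|+⟩) + F(|−⟩))/2`. -/
theorem hofmann_fidelity_lemma {N : ℕ} (K : Fin N → Matrix (Fin 2) (Fin 2) ℂ)
    (hK : ∑ i, (K i)ᴴ * K i = 1)
    (μ : Measure QubitSphere) [IsProbabilityMeasure μ]
    (hμ : ∀ U : Qubit ≃ₗᵢ[ℂ] Qubit, Measure.map (sphereMap U) μ = μ) :
    (∫ ψ : QubitSphere, fidelity K ψ.1 ∂μ) ≥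
      (fidelity K e0 + fidelity K e1) / 2 +
        (fidelity K ePlus + fidelity K eMinus) / 2 - 1 := by
  have hI := fun U => integrable_fidelity_comp K μ U
  have hE := fun U => integral_fidelity_comp K μ hμ U
  have key : ∫ _ψ : QubitSphere, (∑ k, Complex.normSq (K k 0 0 + K k 1 1)) ∂μ ≤
      ∫ ψ : QubitSphere, (fidelity K ψ.1 + fidelity K (pauliX ψ.1) + fidelity K (pauliZ ψ.1) +
        fidelity K (pauliX (pauliZ ψ.1))) ∂μ :=
    integral_mono (integrable_const _)
      ((((hI (.refl ℂ _)).add (hI pauliX)).add (hI pauliZ)).add (hI (pauliZ.trans pauliX)))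
      fun ψ => fidelity_twirl_ge K ψ.1 (mem_sphere_zero_iff_norm.mp ψ.2)
  have hsum : ∫ ψ : QubitSphere, (fidelity K ψ.1 + fidelity K (pauliX ψ.1) +
      fidelity K (pauliZ ψ.1) + fidelity K (pauliX (pauliZ ψ.1))) ∂μ =
      4 * ∫ ψ : QubitSphere, fidelity K ψ.1 ∂μ := by
    have h0 : Integrable (fun ψ : QubitSphere => fidelity K ψ.1) μ := hI (.refl ℂ _)
    have h1 : Integrable (fun ψ : QubitSphere => fidelity K ψ.1 + fidelity K (pauliX ψ.1)) μ :=
      h0.add (hI pauliX)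
    have h2 : Integrable (fun ψ : QubitSphere =>
        fidelity K ψ.1 + fidelity K (pauliX ψ.1) + fidelity K (pauliZ ψ.1)) μ :=
      h1.add (hI pauliZ)
    have h3 : Integrable (fun ψ : QubitSphere => fidelity K (pauliX (pauliZ ψ.1))) μ :=
      hI (pauliZ.trans pauliX)
    have e3 : ∫ ψ : QubitSphere, fidelity K (pauliX (pauliZ ψ.1)) ∂μ =
        ∫ ψ : QubitSphere, fidelity K ψ.1 ∂μ := hE (pauliZ.trans pauliX)
    rw [integral_add h2 h3, integral_add h1 (hI pauliZ), integral_add h0 (hI pauliX), hE pauliX, hE pauliZ, e3]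
    ring
  rw [hsum, integral_const, probReal_univ, one_smul] at key
  have hb := basis_fidelity_le K hK
  linarith

end
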